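/- Let n ≥ 2 be an integer, Γ = ℝ × {0, 1, …, n−1}, and let Λ ⊂ ℝ² be a closed set that is 2-periodic with respect to the second variable. If (Γ, Λ) is a Heisenberg uniqueness pair, then the set Π̃_ne(Λ) = Π^n(Λ) ∪ (Π^1(Λ) \ Π^{1*}(Λ)) ∪ (Π^{n−1}(Λ) \ Π^{(n−1)*}(Λ)) ∪ ⋃_{j=2}^{n−2} (Π^j(Λ) \ Π^{j*}_{ne}(Λ)) is dense in ℝ. -/

import Mathlib

open MeasureTheory Complex

/-- Fourier transform with the convention `f̂(ξ) = ∫ e^{πixξ} f(x) dx`. -/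
noncomputable def FT (f : ℝ → ℂ) (ξ : ℝ) : ℂ :=
  ∫ x : ℝ, Complex.exp (Real.pi * Complex.I * x * ξ) * f x

/-- `e^{πiη}`. -/
noncomputable def cexpEta (η : ℝ) : ℂ := Complex.exp (Real.pi * Complex.I * η)

/-- `Λ` is 2-periodic with respect to the second variable. -/
def Periodic2 (Λ : Set (ℝ × ℝ)) : Prop :=
  ∀ ξ η : ℝ, (ξ, η) ∈ Λ ↔ (ξ, η + 2) ∈ Λ

/-- The projection `Π(Λ)` of `Λ` on the x-axis. -/
def proj (Λ : Set (ℝ × ℝ)) : Set ℝ := {ξ | ∃ η : ℝ, (ξ, η) ∈ Λ}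

/-- `Img(ξ) = {η ∈ [0,2) : (ξ,η) ∈ Λ}`. -/
def Img (Λ : Set (ℝ × ℝ)) (ξ : ℝ) : Set ℝ := {η | η ∈ Set.Ico (0 : ℝ) 2 ∧ (ξ, η) ∈ Λ}

/-- `Π^k(Λ)` for `k < n`: points of `Π(Λ)` whose `Img` has exactly `k` elements. -/
def projExact (Λ : Set (ℝ × ℝ)) (k : ℕ) : Set ℝ :=
  {ξ | ξ ∈ proj Λ ∧ (Img Λ ξ).encard = k}

/-- `Π^n(Λ)`: points of `Π(Λ)` whose `Img` has at least `n` elements. -/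
def projAtLeast (Λ : Set (ℝ × ℝ)) (n : ℕ) : Set ℝ :=
  {ξ | ξ ∈ proj Λ ∧ (n : ℕ∞) ≤ (Img Λ ξ).encard}

/-- `ψ ∈ P^{E,ξ}_l` : there are an open interval `I ∋ ξ` and `φ_1,…,φ_{l-1} ∈ L¹(ℝ)` with
`φ̂_1 + φ̂_2 ψ + ⋯ + φ̂_{l-1} ψ^{l-2} + ψ^{l-1} = 0` on `I ∩ E`. -/
def Pmem (E : Set ℝ) (ξ : ℝ) (l : ℕ) (ψ : ℝ → ℂ) : Prop :=
  ∃ a b : ℝ, ξ ∈ Set.Ioo a b ∧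
    ∃ φ : Fin (l - 1) → ℝ → ℂ, (∀ i, Integrable (φ i)) ∧
      ∀ x ∈ Set.Ioo a b ∩ E,
        (∑ i : Fin (l - 1), FT (φ i) x * ψ x ^ (i : ℕ)) + ψ x ^ (l - 1) = 0

/-- `Π^{1*}(Λ)`: those `ξ ∈ Π^1(Λ)` such that `χ ∈ P^{Π^1(Λ),ξ}_n`, where
`χ(ξ') = e^{πiη}` with `η` the unique element of `Img(ξ')`. -/
def projOneStar (Λ : Set (ℝ × ℝ)) (n : ℕ) : Set ℝ :=
  {ξ | ξ ∈ projExact Λ 1 ∧ ∃ χ : ℝ → ℂ,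
    (∀ ξ' ∈ projExact Λ 1, ∀ η ∈ Img Λ ξ', χ ξ' = cexpEta η) ∧
    Pmem (projExact Λ 1) ξ n χ}

/-- `Π^{k*}_{su}(Λ)`. -/
def projStarSu (Λ : Set (ℝ × ℝ)) (n k : ℕ) : Set ℝ :=
  {ξ | ξ ∈ projExact Λ k ∧ ∃ a b : ℝ, ξ ∈ Set.Ioo a b ∧
    ∃ φ : Fin (n - 1) → ℝ → ℂ, (∀ i, Integrable (φ i)) ∧
      ∀ ξ' ∈ Set.Ioo a b ∩ projExact Λ k, ∀ η ∈ Img Λ ξ',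
        (∑ i : Fin (n - 1), FT (φ i) ξ' * cexpEta η ^ (i : ℕ)) = -(cexpEta η ^ (n - 1))}

/-- `Π^{k*}_{ne}(Λ)` for `k ≥ 2`. -/
def projStarNe (Λ : Set (ℝ × ℝ)) (k : ℕ) : Set ℝ :=
  {ξ | ξ ∈ projExact Λ k ∧ ∃ a b : ℝ, ξ ∈ Set.Ioo a b ∧
    ∃ φ : Fin k → ℝ → ℂ, (∀ i, Integrable (φ i)) ∧
      ∀ ξ' ∈ Set.Ioo a b ∩ projExact Λ k, ∀ η ∈ Img Λ ξ',
        (∑ i : Fin k, FT (φ i) ξ' * cexpEta η ^ (i : ℕ)) = -(cexpEta η ^ k)}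

/-- `(Γ, Λ)` with `Γ = ℝ × {0,…,n-1}` is a Heisenberg uniqueness pair: every admissible
measure `μ = Σ_m (x ↦ (x,m))_*(f_m dx)` (with each `f_m ∈ L¹(ℝ)`) whose Fourier transform
`μ̂(ξ,η) = Σ_m e^{mπiη} f̂_m(ξ)` vanishes on `Λ` must be zero, i.e. each `f_m = 0` a.e. -/
def IsHUP (n : ℕ) (Λ : Set (ℝ × ℝ)) : Prop :=
  ∀ f : Fin n → ℝ → ℂ, (∀ m, Integrable (f m)) →
    (∀ ξ η : ℝ, (ξ, η) ∈ Λ → ∑ m : Fin n, cexpEta η ^ (m : ℕ) * FT (f m) ξ = 0) →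
    ∀ m, f m =ᵐ[volume] (0 : ℝ → ℂ)

/-!
In a nonempty open set over which every fibre of `Λ` has fewer than `n` points, the fibre
cardinality takes, near some `ξ` in that set, a value `m = |Img ξ|` that is an upper bound and is
attained densely. If `m = 0`, then `Λ` has no points over a neighbourhood of `ξ`. If `m > 0` and
`ξ` lies in the corresponding starred set, then a monic polynomial in `z` of degree less than `n`,
with Fourier transforms as coefficients, vanishes at the phases `e^{πiη}` over the points of
`Π^m(Λ)` near `ξ`. When its degree is `m`, its roots over these points are exactly the phases; the
roots depend continuously on the base point and `Λ` is closed, so all fibres near `ξ` have `m`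
points. When `m = 1`, every nonempty fibre near `ξ` has one point anyway. Either way the polynomial
vanishes on all of `Λ` near `ξ`, and multiplying it by a bump function gives the Fourier transform
of a nonzero admissible measure that vanishes on `Λ`.
-/

open Filter Topology Polynomial
open scoped FourierTransform Convolution

section Topology

variable {X : Type*} [TopologicalSpace X]

lemma exists_eventually_le_and_frequently_eq {c : X → ℕ∞} {n : ℕ} {W : Set X} (hW : IsOpen W)
    (hne : W.Nonempty) (hlt : ∀ x ∈ W, c x < n) :
    ∃ x ∈ W, ∀ᶠ y in 𝓝 x, c y ≤ c x ∧ ∃ᶠ z in 𝓝 y, c z = c x := by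
  induction n generalizing W with
  | zero =>
    obtain ⟨x, hx⟩ := hne
    exact absurd (hlt x hx) (by simp)
  | succ n ih =>
    have hle : ∀ x ∈ W, c x ≤ n := fun x hx ↦ Order.le_of_lt_add_one (by simpa using hlt x hx)
    by_cases hfreq : ∀ x ∈ W, ∃ᶠ z in 𝓝 x, c z = n
    · obtain ⟨x₀, hx₀⟩ := hne
      obtain ⟨x, hxn, hxW⟩ := ((hfreq x₀ hx₀).and_eventually (hW.mem_nhds hx₀)).exists
      refine ⟨x, hxW, ?_⟩
      filter_upwards [hW.mem_nhds hxW] with y hy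
      rw [hxn]
      exact ⟨hle y hy, hfreq y hy⟩
    · push Not at hfreq
      obtain ⟨x₀, hx₀, hx₀n⟩ := hfreq
      obtain ⟨V, hVn, hV, hx₀V⟩ := eventually_nhds_iff.1 hx₀n
      obtain ⟨x, hx, hx'⟩ := ih (hW.inter hV) ⟨x₀, hx₀, hx₀V⟩
        fun x hx ↦ (hle x hx.1).lt_of_ne (hVn x hx.2)
      exact ⟨x, hx.1, hx'⟩

lemma eventually_encard_le_of_lowerHemicontinuousAt {Y : Type*} [TopologicalSpace Y] [T2Space Y]
    {Z : X → Set Y} {x : X} (hZ : LowerHemicontinuousAt Z x) (hfin : (Z x).Finite) :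
    ∀ᶠ x' in 𝓝 x, (Z x).encard ≤ (Z x').encard := by
  obtain ⟨O, hO, hdisj⟩ := hfin.t2_separation
  have hmeet : ∀ᶠ x' in 𝓝 x, ∀ y ∈ Z x, (Z x' ∩ O y).Nonempty :=
    (eventually_all_finite hfin).2 fun y hy ↦
      lowerHemicontinuousAt_iff.1 hZ (O y) (hO y).2 ⟨y, hy, (hO y).1⟩
  filter_upwards [hmeet] with x' hx'
  choose! e he using hx'
  refine Set.encard_le_encard_of_injOn (f := e) (fun y hy ↦ (he y hy).1) fun y hy z hz hyz ↦ ?_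
  by_contra hne
  exact (hdisj hy hz hne).le_bot ⟨(he y hy).2, hyz ▸ (he z hz).2⟩

end Topology

section Roots

lemma mem_of_isRoot_of_encard_eq_natDegree {R : Type*} [CommRing R] [IsDomain R] {p : R[X]}
    (hp : p ≠ 0) {s : Set R} (hs : ∀ w ∈ s, p.IsRoot w) (hcard : s.encard = p.natDegree) {w : R}
    (hw : p.IsRoot w) : w ∈ s := by
  classical
  have hsub : s ⊆ (p.roots.toFinset : Set R) := fun w hw ↦ by simpa [hp] using hs w hw
  have hle : (p.roots.toFinset : Set R).encard ≤ s.encard := by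
    rw [hcard, Set.encard_coe_eq_coe_finsetCard]
    exact_mod_cast p.roots.toFinset_card_le.trans p.card_roots'
  rw [((Finset.finite_toSet _).subset hsub).eq_of_subset_of_encard_le hsub hle]
  simpa [hp] using hw

variable {K : Type*} [NormedField K]

lemma exists_mem_roots_dist_lt {p : K[X]} (hp : p.Monic) (hsplits : p.Splits) {δ : ℝ}
    (hδ : 0 ≤ δ) {z : K} (hz : ‖p.eval z‖ < δ ^ p.natDegree) : ∃ w ∈ p.roots, dist w z < δ := by
  by_contra! hfar
  refine hz.not_ge ?_
  calc δ ^ p.natDegree = (p.roots.map fun _ ↦ δ).prod := by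
        simp [hsplits.natDegree_eq_card_roots]
    _ ≤ (p.roots.map fun w ↦ ‖z - w‖).prod :=
        Multiset.prod_map_le_prod_map₀ _ _ (fun _ _ ↦ hδ) fun w hw ↦ by
          simpa [dist_eq_norm_sub'] using hfar w hw
    _ = ‖(p.roots.map (z - ·)).prod‖ := by
        simpa using (p.roots.map (z - ·)).prod_hom (normHom : K →*₀ ℝ)
    _ = ‖p.eval z‖ := by rw [← hsplits.eval_eq_prod_roots_of_monic hp]

lemma lowerHemicontinuousAt_of_frequently_roots_subset [IsAlgClosed K] {X : Type*}
    [TopologicalSpace X] {Z : X → Set K} (hZ : UpperHemicontinuous Z) {p : X → K[X]} {d : ℕ}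
    (hmonic : ∀ x, (p x).Monic) (hdeg : ∀ x, (p x).natDegree = d)
    (hcont : ∀ z, Continuous fun x ↦ (p x).eval z) {x₀ : X} (hroot : ∀ w ∈ Z x₀, (p x₀).IsRoot w)
    (hfreq : ∀ᶠ x in 𝓝 x₀, ∃ᶠ y in 𝓝 x, ∀ w, (p y).IsRoot w → w ∈ Z y) :
    LowerHemicontinuousAt Z x₀ := by
  rw [lowerHemicontinuousAt_iff]
  rintro O hO ⟨z, hzZ, hzO⟩
  obtain ⟨δ, hδ, hball⟩ := Metric.nhds_basis_closedBall.mem_iff.1 (hO.mem_nhds hzO)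
  have hsmall : ∀ᶠ x in 𝓝 x₀, ‖(p x).eval z‖ < δ ^ d :=
    (hcont z).norm.tendsto x₀ |>.eventually_lt_const (by simp [(hroot z hzZ).eq_zero, hδ])
  filter_upwards [hfreq, hsmall.eventually_nhds] with x hx hxsmall
  have hmeet : ∃ᶠ y in 𝓝 x, (Z y ∩ Metric.closedBall z δ).Nonempty := by
    refine (hx.and_eventually hxsmall).mono fun y ⟨hyroots, hysmall⟩ ↦ ?_
    obtain ⟨w, hw, hwz⟩ := exists_mem_roots_dist_lt (hmonic y) (IsAlgClosed.splits _) hδ.le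
      (by rwa [hdeg])
    exact ⟨w, hyroots w (isRoot_of_mem_roots hw), hwz.le⟩
  exact (hZ.frequently x _ Metric.isClosed_closedBall hmeet).mono
    (Set.inter_subset_inter_right _ hball)

end Roots

section FourierTransform

variable {f g : ℝ → ℂ}

lemma FT_eq_fourier (f : ℝ → ℂ) (ξ : ℝ) : FT f ξ = 𝓕 f (-(ξ / 2)) := by
  rw [Real.fourier_real_eq_integral_exp_smul, FT]
  congr with x
  rw [smul_eq_mul]
  congr 2
  push_cast
  ring

lemma continuous_FT (hf : Integrable f) : Continuous (FT f) := by
  have hcont : Continuous (𝓕 f) :=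
    VectorFourier.fourierIntegral_continuous (L := innerₗ ℝ) Real.continuous_fourierChar
      continuous_inner hf
  have harg : Continuous fun ξ : ℝ ↦ -(ξ / 2) := by fun_prop
  exact (hcont.comp harg).congr fun ξ ↦ (FT_eq_fourier f ξ).symm

lemma FT_congr_ae (h : f =ᵐ[volume] g) : FT f = FT g := by
  ext ξ
  rw [FT_eq_fourier, FT_eq_fourier, Real.fourier_congr_ae h]

lemma FT_zero : FT 0 = 0 := by
  ext ξ
  simp [FT]

lemma FT_convolution (hf : Integrable f) (hg : Integrable g) :
    FT (f ⋆[ContinuousLinearMap.mul ℂ ℂ] g) = FT f * FT g := by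
  ext ξ
  simpa only [FT_eq_fourier, Pi.mul_apply] using Real.fourier_mul_convolution_eq hf hg _

lemma exists_integrable_FT_eq_schwartzMap (φ : SchwartzMap ℝ ℂ) :
    ∃ f : ℝ → ℂ, Integrable f ∧ FT f = φ := by
  let dilation : ℝ ≃L[ℝ] ℝ :=
    ContinuousLinearEquiv.unitsEquivAut ℝ (Units.mk0 (-2) (by norm_num))
  let ψ : SchwartzMap ℝ ℂ := SchwartzMap.compCLMOfContinuousLinearEquiv ℂ dilation φ
  refine ⟨(𝓕⁻ ψ : SchwartzMap ℝ ℂ), SchwartzMap.integrable _, ?_⟩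
  ext ξ
  have hξ : dilation (-(ξ / 2)) = ξ := by
    simp [dilation]
  rw [FT_eq_fourier, ← SchwartzMap.fourier_coe, FourierTransform.fourier_fourierInv_eq]
  simp [ψ, hξ]

lemma exists_integrable_FT_eqOn_zero_and_ne_zero {U : Set ℝ} {ξ : ℝ} (hU : U ∈ 𝓝 ξ) :
    ∃ g : ℝ → ℂ, Integrable g ∧ Set.EqOn (FT g) 0 Uᶜ ∧ FT g ξ ≠ 0 := by
  obtain ⟨b, hbU, hbcompact, hbsmooth, -, hbξ⟩ := exists_contDiff_tsupport_subset (n := ⊤) hU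
  have hcompact : HasCompactSupport fun x ↦ (b x : ℂ) := hbcompact.comp_left ofReal_zero
  obtain ⟨g, hg, hFTg⟩ := exists_integrable_FT_eq_schwartzMap
    (hcompact.toSchwartzMap (ofRealCLM.contDiff.comp hbsmooth))
  have hgb : ∀ ζ, FT g ζ = b ζ := fun ζ ↦ congrFun hFTg ζ
  refine ⟨g, hg, fun ζ hζ ↦ ?_, by simp [hgb, hbξ]⟩
  simp [hgb, image_eq_zero_of_notMem_tsupport fun h ↦ hζ (hbU h)]

end FourierTransform

section FourierPoly

variable {d : ℕ}

/-- The monic polynomial `φ̂_1(ξ) + φ̂_2(ξ) z + ⋯ + φ̂_d(ξ) z^{d-1} + z^d` in `z`, whose vanishing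
at the points `e^{πiη}` is the relation in the definitions of the starred sets. -/
noncomputable def fourierPoly (φ : Fin d → ℝ → ℂ) (ξ : ℝ) : ℂ[X] :=
  X ^ d + ofFn d fun i ↦ FT (φ i) ξ

variable (φ : Fin d → ℝ → ℂ) (ξ : ℝ)

lemma eval_fourierPoly (w : ℂ) :
    (fourierPoly φ ξ).eval w = (∑ i, FT (φ i) ξ * w ^ (i : ℕ)) + w ^ d := by
  simp [fourierPoly, ofFn_eq_sum_monomial, eval_finsetSum, add_comm]

lemma monic_fourierPoly : (fourierPoly φ ξ).Monic :=
  monic_X_pow_add (ofFn_degree_lt _)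

lemma natDegree_fourierPoly : (fourierPoly φ ξ).natDegree = d := by
  refine natDegree_eq_of_degree_eq_some ?_
  rw [fourierPoly, degree_add_eq_left_of_degree_lt] <;> simp [ofFn_degree_lt]

variable {φ}

lemma continuous_eval_fourierPoly (hφ : ∀ i, Integrable (φ i)) (w : ℂ) :
    Continuous fun ξ ↦ (fourierPoly φ ξ).eval w := by
  have hcont := fun i ↦ continuous_FT (hφ i)
  simp only [eval_fourierPoly]
  fun_prop

lemma exists_integrable_FT_eq_mul_coeff {g : ℝ → ℂ} (hg : Integrable g)
    (hφ : ∀ i, Integrable (φ i)) (m : ℕ) :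
    ∃ f : ℝ → ℂ, Integrable f ∧ ∀ ξ, FT f ξ = FT g ξ * (fourierPoly φ ξ).coeff m := by
  rcases lt_trichotomy m d with hm | rfl | hm
  · refine ⟨_, hg.integrable_convolution (ContinuousLinearMap.mul ℂ ℂ) (hφ ⟨m, hm⟩), fun ξ ↦ ?_⟩
    simp [FT_convolution hg (hφ _), fourierPoly, coeff_X_pow, hm, hm.ne]
  · exact ⟨g, hg, fun ξ ↦ by simp [fourierPoly]⟩
  · refine ⟨0, integrable_zero _ _ _, fun ξ ↦ ?_⟩
    simp [FT_zero, fourierPoly, coeff_X_pow, hm.le, hm.ne']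

end FourierPoly

section Phases

variable {Λ : Set (ℝ × ℝ)} {ξ η : ℝ} {k : ℕ}

lemma cexpEta_eq_toCircle (η : ℝ) : cexpEta η = AddCircle.toCircle (η : AddCircle (2 : ℝ)) := by
  rw [AddCircle.toCircle_apply_mk, Circle.coe_exp, cexpEta]
  congr 1
  push_cast
  ring

lemma continuous_cexpEta : Continuous cexpEta := by
  unfold cexpEta
  fun_prop

lemma periodic_cexpEta : Function.Periodic cexpEta 2 := fun η ↦ by
  simp [cexpEta_eq_toCircle]

lemma injOn_cexpEta : Set.InjOn cexpEta (Set.Ico 0 2) := by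
  intro x hx y hy hxy
  have : Fact ((0 : ℝ) < 2) := ⟨two_pos⟩
  rw [cexpEta_eq_toCircle, cexpEta_eq_toCircle, Circle.coe_inj] at hxy
  exact (AddCircle.coe_eq_coe_iff_of_mem_Ico (a := 0) (by simpa using hx) (by simpa using hy)).1
    (AddCircle.injective_toCircle two_ne_zero hxy)

/-- The fibre of `Λ` over `ξ`, recorded through the points `e^{πiη}` of the unit circle. -/
def phases (Λ : Set (ℝ × ℝ)) (ξ : ℝ) : Set ℂ := cexpEta '' Img Λ ξ

lemma encard_phases (Λ : Set (ℝ × ℝ)) (ξ : ℝ) : (phases Λ ξ).encard = (Img Λ ξ).encard :=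
  (injOn_cexpEta.mono fun _ h ↦ h.1).encard_image

lemma cexpEta_mem_phases (hper : Periodic2 Λ) (h : (ξ, η) ∈ Λ) : cexpEta η ∈ phases Λ ξ := by
  have hpair : Function.Periodic (fun t ↦ ((ξ, t) ∈ Λ, cexpEta t)) 2 := fun t ↦
    Prod.ext (propext (hper ξ t).symm) (periodic_cexpEta t)
  obtain ⟨η', hη', heq⟩ := hpair.exists_mem_Ico₀ two_pos η
  rw [Prod.mk.injEq] at heq
  exact ⟨η', ⟨hη', heq.1.mp h⟩, heq.2.symm⟩

lemma upperHemicontinuous_phases (hclosed : IsClosed Λ) (hper : Periodic2 Λ) :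
    UpperHemicontinuous (phases Λ) := by
  rw [upperHemicontinuous_iff_isClosed_compl_preimage_Iic_compl]
  intro u hu
  have hcont := continuous_cexpEta
  have hlift : IsClosed {q : ℝ × Set.Icc (0 : ℝ) 2 | (q.1, (q.2 : ℝ)) ∈ Λ ∧ cexpEta q.2 ∈ u} :=
    (hclosed.preimage (f := fun q : ℝ × Set.Icc (0 : ℝ) 2 ↦ (q.1, (q.2 : ℝ))) (by fun_prop)).inter
      (hu.preimage (f := fun q : ℝ × Set.Icc (0 : ℝ) 2 ↦ cexpEta q.2) (by fun_prop))
  convert isClosedMap_fst_of_compactSpace _ hlift using 1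
  ext ξ
  simp only [Set.mem_compl_iff, Set.mem_preimage, Set.mem_Iic,
    Set.not_subset_iff_exists_mem_notMem, not_not, Set.mem_image]
  constructor
  · rintro ⟨_, ⟨η, hη, rfl⟩, hu⟩
    exact ⟨(ξ, ⟨η, Set.Ico_subset_Icc_self hη.1⟩), ⟨hη.2, hu⟩, rfl⟩
  · rintro ⟨⟨_, η⟩, ⟨hη, hu⟩, rfl⟩
    exact ⟨_, cexpEta_mem_phases hper hη, hu⟩

lemma mem_proj_of_encard_ne_zero (h : (Img Λ ξ).encard ≠ 0) : ξ ∈ proj Λ := by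
  obtain ⟨η, hη⟩ := Set.encard_ne_zero.1 h
  exact ⟨η, hη.2⟩

lemma mem_projExact_iff (hk : k ≠ 0) : ξ ∈ projExact Λ k ↔ (Img Λ ξ).encard = k :=
  ⟨And.right, fun h ↦ ⟨mem_proj_of_encard_ne_zero (by simpa [h]), h⟩⟩

lemma mem_projAtLeast_iff (hk : k ≠ 0) : ξ ∈ projAtLeast Λ k ↔ k ≤ (Img Λ ξ).encard :=
  ⟨And.right, fun h ↦ ⟨mem_proj_of_encard_ne_zero fun h₀ ↦ hk (by simpa [h₀] using h), h⟩⟩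

end Phases

section Annihilation

variable {Λ : Set (ℝ × ℝ)} {E : Set ℝ} {ξ : ℝ} {d k n : ℕ}

/-- Near `ξ`, a monic polynomial of degree `d` with Fourier transforms of integrable functions as
lower coefficients annihilates the phases of `Λ` over every point of `E`. -/
def LocallyAnnihilated (Λ : Set (ℝ × ℝ)) (E : Set ℝ) (d : ℕ) (ξ : ℝ) : Prop :=
  ∃ φ : Fin d → ℝ → ℂ, (∀ i, Integrable (φ i)) ∧
    ∀ᶠ ζ in 𝓝 ξ, ζ ∈ E → ∀ w ∈ phases Λ ζ, (fourierPoly φ ζ).IsRoot w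

lemma locallyAnnihilated_of_mem_projOneStar (h : ξ ∈ projOneStar Λ n) :
    LocallyAnnihilated Λ (projExact Λ 1) (n - 1) ξ := by
  obtain ⟨-, χ, hχ, a, b, hab, φ, hφ, hrel⟩ := h
  refine ⟨φ, hφ, ?_⟩
  filter_upwards [Ioo_mem_nhds hab.1 hab.2]
  rintro ζ hζ hζE _ ⟨η, hη, rfl⟩
  rw [IsRoot, eval_fourierPoly, ← hχ ζ hζE η hη]
  exact hrel ζ ⟨hζ, hζE⟩

lemma locallyAnnihilated_of_mem_projStarNe (h : ξ ∈ projStarNe Λ k) :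
    LocallyAnnihilated Λ (projExact Λ k) k ξ := by
  obtain ⟨-, a, b, hab, φ, hφ, hrel⟩ := h
  refine ⟨φ, hφ, ?_⟩
  filter_upwards [Ioo_mem_nhds hab.1 hab.2]
  rintro ζ hζ hζE _ ⟨η, hη, rfl⟩
  rw [IsRoot, eval_fourierPoly, hrel ζ ⟨hζ, hζE⟩ η hη, neg_add_cancel]

lemma IsHUP.not_locallyAnnihilated (hHUP : IsHUP n Λ) (hper : Periodic2 Λ) (hd : d < n)
    (hE : ∀ᶠ ζ in 𝓝 ξ, (Img Λ ζ).Nonempty → ζ ∈ E) : ¬ LocallyAnnihilated Λ E d ξ := by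
  rintro ⟨φ, hφ, hrootE⟩
  have hroot : {ζ | ∀ w ∈ phases Λ ζ, (fourierPoly φ ζ).IsRoot w} ∈ 𝓝 ξ := by
    filter_upwards [hE, hrootE] with ζ hζE hζ w hw
    exact hζ (hζE (Set.image_nonempty.1 ⟨w, hw⟩)) w hw
  obtain ⟨g, hg, hg₀, hgξ⟩ := exists_integrable_FT_eqOn_zero_and_ne_zero hroot
  choose f hf hFT using exists_integrable_FT_eq_mul_coeff hg hφ
  have htransform : ∀ ζ w, ∑ m : Fin n, w ^ (m : ℕ) * FT (f m) ζ
      = FT g ζ * (fourierPoly φ ζ).eval w := fun ζ w ↦ by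
    rw [eval_eq_sum_range' (by rwa [natDegree_fourierPoly]), Finset.mul_sum, Finset.sum_range]
    exact Finset.sum_congr rfl fun m _ ↦ by rw [hFT]; ring
  have hvanish : ∀ ζ η, (ζ, η) ∈ Λ → ∑ m : Fin n, cexpEta η ^ (m : ℕ) * FT (f m) ζ = 0 := by
    intro ζ η hη
    rw [htransform, mul_eq_zero, or_iff_not_imp_left]
    intro hgζ
    have hζ : ∀ w ∈ phases Λ ζ, (fourierPoly φ ζ).IsRoot w := not_imp_comm.1 (@hg₀ ζ) hgζ
    exact hζ _ (cexpEta_mem_phases hper hη)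
  have hfd : f d =ᵐ[volume] 0 := hHUP (f ·) (hf ·) hvanish ⟨d, hd⟩
  have hcoeff : (fourierPoly φ ξ).coeff d = 1 := by
    simpa [natDegree_fourierPoly] using (monic_fourierPoly φ ξ).coeff_natDegree
  exact hgξ (by simpa [FT_congr_ae hfd, FT_zero, hcoeff] using (hFT d ξ).symm)

lemma LocallyAnnihilated.eventually_encard_eq (hclosed : IsClosed Λ) (hper : Periodic2 Λ)
    (hξ : ξ ∈ projExact Λ k) (hle : ∀ᶠ ζ in 𝓝 ξ, (Img Λ ζ).encard ≤ k)
    (hfreq : ∀ᶠ ζ in 𝓝 ξ, ∃ᶠ ζ' in 𝓝 ζ, ζ' ∈ projExact Λ k)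
    (h : LocallyAnnihilated Λ (projExact Λ k) k ξ) : ∀ᶠ ζ in 𝓝 ξ, (Img Λ ζ).encard = k := by
  obtain ⟨φ, hφ, hroot⟩ := h
  have hlower : LowerHemicontinuousAt (phases Λ) ξ := by
    refine lowerHemicontinuousAt_of_frequently_roots_subset
      (upperHemicontinuous_phases hclosed hper) (monic_fourierPoly φ) (natDegree_fourierPoly φ)
      (continuous_eval_fourierPoly hφ) (hroot.self_of_nhds hξ) ?_
    filter_upwards [hfreq, hroot.eventually_nhds] with ζ hζfreq hζroot
    refine (hζfreq.and_eventually hζroot).mono fun ζ' ⟨hζ', hζ'root⟩ w hw ↦ ?_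
    exact mem_of_isRoot_of_encard_eq_natDegree (monic_fourierPoly φ ζ').ne_zero (hζ'root hζ')
      (by rw [encard_phases, natDegree_fourierPoly, hζ'.2]) hw
  have hcard : (phases Λ ξ).encard = k := by rw [encard_phases, hξ.2]
  filter_upwards [hle, eventually_encard_le_of_lowerHemicontinuousAt hlower
    (Set.finite_of_encard_eq_coe hcard)] with ζ hζle hζge
  rw [hcard, encard_phases] at hζge
  exact hζle.antisymm hζge

lemma IsHUP.not_eventually_encard_le_zero (hHUP : IsHUP n Λ) (hper : Periodic2 Λ) (hn : 0 < n)
    (ξ : ℝ) : ¬ ∀ᶠ ζ in 𝓝 ξ, (Img Λ ζ).encard ≤ 0 := fun hle ↦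
  hHUP.not_locallyAnnihilated (E := ∅) (ξ := ξ) hper hn
    (by simpa [Set.not_nonempty_iff_eq_empty] using hle)
    ⟨fun i ↦ i.elim0, fun i ↦ i.elim0, by simp⟩

lemma IsHUP.notMem_projOneStar (hHUP : IsHUP n Λ) (hper : Periodic2 Λ) (hn : 0 < n)
    (hle : ∀ᶠ ζ in 𝓝 ξ, (Img Λ ζ).encard ≤ 1) : ξ ∉ projOneStar Λ n := fun h ↦ by
  refine hHUP.not_locallyAnnihilated hper (Nat.sub_one_lt_of_lt hn) ?_
    (locallyAnnihilated_of_mem_projOneStar h)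
  filter_upwards [hle] with ζ hζle hζ
  exact (mem_projExact_iff one_ne_zero).2 (hζle.antisymm (Set.one_le_encard_iff_nonempty.2 hζ))

lemma IsHUP.notMem_projStarNe (hHUP : IsHUP n Λ) (hclosed : IsClosed Λ) (hper : Periodic2 Λ)
    (hk : k ≠ 0) (hkn : k < n) (hle : ∀ᶠ ζ in 𝓝 ξ, (Img Λ ζ).encard ≤ k)
    (hfreq : ∀ᶠ ζ in 𝓝 ξ, ∃ᶠ ζ' in 𝓝 ζ, (Img Λ ζ').encard = k) : ξ ∉ projStarNe Λ k := fun h ↦ by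
  simp only [← mem_projExact_iff hk] at hfreq
  have hann := locallyAnnihilated_of_mem_projStarNe h
  refine hHUP.not_locallyAnnihilated hper hkn ?_ hann
  filter_upwards [hann.eventually_encard_eq hclosed hper h.1 hle hfreq] with ζ hζ _
  exact (mem_projExact_iff hk).2 hζ

end Annihilation

theorem necessary_part (n : ℕ) (hn : 2 ≤ n) (Λ : Set (ℝ × ℝ))
    (hclosed : IsClosed Λ) (hper : Periodic2 Λ) (hHUP : IsHUP n Λ) :
    Dense (projAtLeast Λ n ∪ (projExact Λ 1 \ projOneStar Λ n) ∪
      (projExact Λ (n - 1) \ projStarNe Λ (n - 1)) ∪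
      ⋃ j ∈ Finset.Icc 2 (n - 2), (projExact Λ j \ projStarNe Λ j)) := by
  rw [dense_iff_inter_open]
  intro W hW hWne
  by_cases hlarge : ∃ ξ ∈ W, n ≤ (Img Λ ξ).encard
  · obtain ⟨ξ, hξW, hξ⟩ := hlarge
    exact ⟨ξ, hξW, .inl (.inl (.inl ((mem_projAtLeast_iff (by lia)).2 hξ)))⟩
  push Not at hlarge
  obtain ⟨ξ, hξW, hgeneric⟩ := exists_eventually_le_and_frequently_eq hW hWne hlarge
  refine ⟨ξ, hξW, ?_⟩
  obtain ⟨m, hm⟩ := ENat.ne_top_iff_exists.1 (hlarge ξ hξW).ne_top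
  have hmn : m < n := by exact_mod_cast hm ▸ hlarge ξ hξW
  simp only [← hm, eventually_and] at hgeneric
  obtain ⟨hle, hfreq⟩ := hgeneric
  have hm₀ : m ≠ 0 := by
    rintro rfl
    exact hHUP.not_eventually_encard_le_zero hper hmn ξ hle
  have hξ : ξ ∈ projExact Λ m := (mem_projExact_iff hm₀).2 hm.symm
  have hstar : ξ ∉ projStarNe Λ m := hHUP.notMem_projStarNe hclosed hper hm₀ hmn hle hfreq
  obtain rfl | rfl | hm₂ : m = 1 ∨ m = n - 1 ∨ m ∈ Finset.Icc 2 (n - 2) := by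
    rw [Finset.mem_Icc]; lia
  · exact .inl (.inl (.inr ⟨hξ, hHUP.notMem_projOneStar hper (by lia) hle⟩))
  · exact .inl (.inr ⟨hξ, hstar⟩)
  · exact .inr (Set.mem_biUnion hm₂ ⟨hξ, hstar⟩)
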